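/- arXiv:1903.09011 — 3 statements merged into one kernel-verified Lean document; each statement's English description precedes it below -/
import Mathlib

section
/- If G is a 3-edge-connected non-planar graph with at least 6 vertices, then G contains an immersion of K_{3,3}. -/
/-- A finite multigraph without loops: vertices `V`, edges `E`,
each edge has an unordered pair of distinct endpoints. -/
structure Multigraph where
  V : Type
  E : Type
  [fV : Fintype V]
  [fE : Fintype E]
  [dV : DecidableEq V]
  [dE : DecidableEq E]
  ends : E → Sym2 V
  noLoop : ∀ e, ¬ (ends e).IsDiag

attribute [instance] Multigraph.fV Multigraph.fE Multigraph.dV Multigraph.dE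

namespace Multigraph

/-- Walks in a multigraph. -/
inductive Walk (G : Multigraph) : G.V → G.V → Type
  | nil (v : G.V) : Walk G v v
  | cons {u v w : G.V} (e : G.E) (h : G.ends e = s(u, v)) (p : Walk G v w) : Walk G u w

/-- The list of edges traversed by a walk. -/
def Walk.edges {G : Multigraph} : {u v : G.V} → G.Walk u v → List G.E
  | _, _, .nil _ => []
  | _, _, .cons e _ p => e :: p.edges

/-- The list of vertices visited by a walk. -/
def Walk.support {G : Multigraph} : {u v : G.V} → G.Walk u v → List G.V
  | u, _, .nil _ => [u]
  | u, _, .cons _ _ p => u :: p.support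

/-- A walk is a path if it visits no vertex twice. -/
def Walk.IsPath {G : Multigraph} {u v : G.V} (p : G.Walk u v) : Prop := p.support.Nodup

/-- Data of an immersion of `H` into `G`: an injective map on vertices and,
for each edge of `H`, a path in `G` joining the images of its endpoints,
the paths being pairwise edge-disjoint. -/
structure ImmersionData (H G : Multigraph) where
  vmap : H.V → G.V
  inj : Function.Injective vmap
  pstart : H.E → G.V
  pend : H.E → G.V
  walk : ∀ e, G.Walk (pstart e) (pend e)
  ends_eq : ∀ e, s(pstart e, pend e) = (H.ends e).map vmap
  isPath : ∀ e, (walk e).IsPath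
  edgeDisj : ∀ e e', e ≠ e' → List.Disjoint (walk e).edges (walk e').edges

/-- `H` immerses in `G`. -/
def Immerses (H G : Multigraph) : Prop := Nonempty (ImmersionData H G)

/-- Data witnessing that `G` contains a subdivision of `H` as a subgraph
(i.e. `H` is a topological minor of `G`): as an immersion, but moreover the
paths may only meet at images of common endpoints. -/
structure SubdivisionData (H G : Multigraph) extends ImmersionData H G where
  vtxDisj : ∀ e e', e ≠ e' → ∀ x, x ∈ (walk e).support → x ∈ (walk e').support →
    ∃ w, x = vmap w ∧ w ∈ H.ends e ∧ w ∈ H.ends e'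

/-- `G` contains a subdivision of `H` as a subgraph. -/
def ContainsSubdivision (H G : Multigraph) : Prop := Nonempty (SubdivisionData H G)

/-- The complete bipartite graph `K_{3,3}`. -/
def K33 : Multigraph where
  V := Fin 3 ⊕ Fin 3
  E := Fin 3 × Fin 3
  ends e := s(Sum.inl e.1, Sum.inr e.2)
  noLoop e := by simp [Sym2.mk_isDiag_iff]

/-- The complete graph `K_5`. -/
def K5 : Multigraph where
  V := Fin 5
  E := {p : Fin 5 × Fin 5 // p.1 < p.2}
  ends e := s(e.1.1, e.1.2)
  noLoop e := by simpa [Sym2.mk_isDiag_iff] using e.2.ne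

variable (G : Multigraph)

/-- The degree of a vertex: the number of incident edges. -/
def deg (v : G.V) : ℕ := (Finset.univ.filter fun e => v ∈ G.ends e).card

/-- The multiplicity of the (possible) edge between `u` and `v`. -/
def mult (u v : G.V) : ℕ := (Finset.univ.filter fun e => G.ends e = s(u, v)).card

/-- The edge cut determined by a set `A` of vertices. -/
def cut (A : Finset G.V) : Finset G.E :=
  Finset.univ.filter fun e => ∃ u ∈ A, ∃ v ∈ Aᶜ, G.ends e = s(u, v)

/-- Every edge cut of `G` has at least `k` edges. -/
def EdgeConnGe (k : ℕ) : Prop :=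
  ∀ A : Finset G.V, A.Nonempty → A ≠ Finset.univ → k ≤ (G.cut A).card

/-- Internally 4-edge-connected: 3-edge-connected and every 3-edge cut has a
side consisting of a single vertex. -/
def Internally4EC : Prop :=
  G.EdgeConnGe 3 ∧ ∀ A : Finset G.V, A.Nonempty → A ≠ Finset.univ →
    (G.cut A).card = 3 → A.card = 1 ∨ Aᶜ.card = 1

/-- Weakly 5-edge-connected: internally 4-edge-connected and every 4-edge cut
has a side with at most two vertices. -/
def Weakly5EC : Prop :=
  G.Internally4EC ∧ ∀ A : Finset G.V, A.Nonempty → A ≠ Finset.univ →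
    (G.cut A).card = 4 → A.card ≤ 2 ∨ Aᶜ.card ≤ 2

/-- `G` is `d`-regular. -/
def IsRegular (d : ℕ) : Prop := ∀ v, G.deg v = d

/-- `G` is connected. -/
def Connected : Prop := ∀ u v : G.V, Nonempty (G.Walk u v)

/-- `v` is a cut-vertex: the remaining vertices split into two nonempty parts
with no edge between them. -/
def IsCutVertex (v : G.V) : Prop :=
  ∃ C D : Finset G.V, C.Nonempty ∧ D.Nonempty ∧ Disjoint C D ∧ v ∉ C ∧ v ∉ D ∧
    (∀ x : G.V, x ∈ C ∪ D ∨ x = v) ∧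
    ∀ e : G.E, ¬ ∃ u ∈ C, ∃ w ∈ D, G.ends e = s(u, w)

/-- `G` is 2-connected. -/
def TwoConnected : Prop :=
  G.Connected ∧ 3 ≤ Fintype.card G.V ∧ ∀ v, ¬ G.IsCutVertex v

/-- Planarity, via Kuratowski's characterization: no subdivision of `K_5`
nor of `K_{3,3}` as a subgraph. -/
def Planar : Prop := ¬ ContainsSubdivision K5 G ∧ ¬ ContainsSubdivision K33 G

end Multigraph

namespace Multigraph

section Helpers

variable {G : Multigraph}

/-- `v` can be reached from `u` by using only edges of `S`. -/
def Reach (G : Multigraph) (S : Set G.E) : G.V → G.V → Prop :=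
  Relation.ReflTransGen fun u v => ∃ e ∈ S, G.ends e = s(u, v)

theorem Reach.refl (S : Set G.E) (u : G.V) : G.Reach S u u := Relation.ReflTransGen.refl

theorem Reach.trans {S : Set G.E} {u v w : G.V} (h : G.Reach S u v) (h' : G.Reach S v w) :
    G.Reach S u w := Relation.ReflTransGen.trans h h'

theorem Reach.mono {S S' : Set G.E} {u v : G.V} (h : G.Reach S u v) (hS : S ⊆ S') :
    G.Reach S' u v :=
  by
  induction h with
  | refl => exact Reach.refl _ _
  | tail _ hbc ih =>
    obtain ⟨e, he, hee⟩ := hbc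
    exact Relation.ReflTransGen.tail ih ⟨e, hS he, hee⟩

theorem Reach.symm {S : Set G.E} {u v : G.V} (h : G.Reach S u v) : G.Reach S v u :=
  by
  induction h with
  | refl => exact Reach.refl _ _
  | tail _ hbc ih =>
    obtain ⟨e, he, hee⟩ := hbc
    exact Relation.ReflTransGen.head ⟨e, he, hee.trans Sym2.eq_swap⟩ ih

theorem Reach.single {S : Set G.E} {u v : G.V} {e : G.E} (he : e ∈ S)
    (h : G.ends e = s(u, v)) : G.Reach S u v :=
  Relation.ReflTransGen.single ⟨e, he, h⟩

theorem Walk.reach {u v : G.V} (p : G.Walk u v) : G.Reach {e | e ∈ p.edges} u v := by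
  induction p with
  | nil v => exact Reach.refl _ _
  | cons e h p ih =>
    refine (Reach.single (e := e) ?_ h).trans (ih.mono ?_)
    · simp [Walk.edges]
    · intro f hf
      simp only [Walk.edges, Set.mem_ofPred_eq, List.mem_cons] at hf ⊢
      exact Or.inr hf

theorem Walk.start_mem {u v : G.V} (p : G.Walk u v) : u ∈ p.support := by
  cases p <;> simp [Walk.support]

theorem Walk.end_mem {u v : G.V} (p : G.Walk u v) : v ∈ p.support := by
  induction p with
  | nil v => simp [Walk.support]
  | cons e h p ih => simp [Walk.support, ih]

theorem Walk.mem_support_of_edge {u v : G.V} (p : G.Walk u v) {e : G.E} (he : e ∈ p.edges)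
    {y : G.V} (hy : y ∈ G.ends e) : y ∈ p.support := by
  induction p with
  | nil v => simp [Walk.edges] at he
  | cons f h p ih =>
    simp only [Walk.edges, List.mem_cons] at he
    simp only [Walk.support, List.mem_cons]
    rcases he with rfl | he
    · rw [h, Sym2.mem_iff] at hy
      rcases hy with rfl | rfl
      · exact Or.inl rfl
      · exact Or.inr p.start_mem
    · exact Or.inr (ih he)

theorem Walk.drop {u v : G.V} (p : G.Walk u v) (hp : p.IsPath) {x : G.V} (hx : x ∈ p.support) :
    ∃ q : G.Walk x v, q.IsPath ∧ ∀ e ∈ q.edges, e ∈ p.edges := by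
  induction p with
  | nil v =>
    simp only [Walk.support, List.mem_singleton] at hx
    subst hx
    exact ⟨.nil _, hp, fun e he => he⟩
  | @cons a _ _ f h p ih =>
    by_cases hxu : x = a
    · subst hxu
      exact ⟨.cons f h p, hp, fun e he => he⟩
    · simp only [Walk.support, List.mem_cons, hxu, false_or] at hx
      simp only [Walk.IsPath, Walk.support, List.nodup_cons] at hp
      obtain ⟨q, hq, hqe⟩ := ih hp.2 hx
      exact ⟨q, hq, fun e he => by simp [Walk.edges, hqe e he]⟩

theorem Reach.exists_path {S : Set G.E} {u v : G.V} (h : G.Reach S u v) :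
    ∃ p : G.Walk u v, p.IsPath ∧ ∀ e ∈ p.edges, e ∈ S := by
  induction h using Relation.ReflTransGen.head_induction_on with
  | refl => exact ⟨.nil _, by simp [Walk.IsPath, Walk.support], by simp [Walk.edges]⟩
  | @head a c hac _ ih =>
    obtain ⟨p, hp, hpe⟩ := ih
    obtain ⟨e, he, hee⟩ := hac
    by_cases ha : a ∈ p.support
    · obtain ⟨q, hq, hqe⟩ := p.drop hp ha
      exact ⟨q, hq, fun f hf => hpe f (hqe f hf)⟩
    · refine ⟨.cons e hee p, ?_, ?_⟩
      · simp only [Walk.IsPath, Walk.support, List.nodup_cons]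
        exact ⟨ha, hp⟩
      · intro f hf
        simp only [Walk.edges, List.mem_cons] at hf
        rcases hf with rfl | hf
        · exact he
        · exact hpe f hf

theorem Walk.split {u v : G.V} (p : G.Walk u v) (hp : p.IsPath) {x : G.V} (hx : x ∈ p.support) :
    ∃ T₁ T₂ : Set G.E, (∀ e ∈ T₁, e ∉ T₂) ∧ (∀ e ∈ T₁, e ∈ p.edges) ∧ (∀ e ∈ T₂, e ∈ p.edges) ∧
      G.Reach T₁ u x ∧ G.Reach T₂ x v := by
  induction p with
  | nil v =>
    simp only [Walk.support, List.mem_singleton] at hx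
    subst hx
    exact ⟨∅, ∅, by simp, by simp, by simp, Reach.refl _ _, Reach.refl _ _⟩
  | @cons a _ _ f h p ih =>
    by_cases hxu : x = a
    · subst hxu
      exact ⟨∅, _, by simp, by simp, fun e he => he, Reach.refl _ _, (Walk.cons f h p).reach⟩
    · simp only [Walk.support, List.mem_cons, hxu, false_or] at hx
      simp only [Walk.IsPath, Walk.support, List.nodup_cons] at hp
      obtain ⟨T₁, T₂, hd, h1, h2, r1, r2⟩ := ih hp.2 hx
      have hf : f ∉ p.edges := fun hf => hp.1 (p.mem_support_of_edge hf (by simp [h]))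
      refine ⟨insert f T₁, T₂, ?_, ?_, ?_, ?_, r2⟩
      · rintro e (rfl | he) he2
        · exact hf (h2 _ he2)
        · exact hd e he he2
      · rintro e (rfl | he)
        · simp [Walk.edges]
        · simp [Walk.edges, h1 e he]
      · intro e he
        simp [Walk.edges, h2 e he]
      · exact (Reach.single (Set.mem_insert _ _) h).trans (r1.mono (Set.subset_insert _ _))

theorem Walk.start_edge_unique {u v : G.V} (p : G.Walk u v) (hp : p.IsPath) {e e' : G.E}
    (he : e ∈ p.edges) (he' : e' ∈ p.edges) (hu : u ∈ G.ends e) (hu' : u ∈ G.ends e') :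
    e = e' := by
  cases p with
  | nil => simp [Walk.edges] at he
  | cons f h p =>
    simp only [Walk.IsPath, Walk.support, List.nodup_cons] at hp
    simp only [Walk.edges, List.mem_cons] at he he'
    have key : ∀ g ∈ p.edges, u ∉ G.ends g := fun g hg hug => hp.1 (p.mem_support_of_edge hg hug)
    rcases he with rfl | he
    · rcases he' with rfl | he'
      · rfl
      · exact absurd hu' (key _ he')
    · exact absurd hu (key _ he)

theorem Walk.end_edge_unique {u v : G.V} (p : G.Walk u v) (hp : p.IsPath) {e e' : G.E}
    (he : e ∈ p.edges) (he' : e' ∈ p.edges) (hu : v ∈ G.ends e) (hu' : v ∈ G.ends e') :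
    e = e' := by
  induction p with
  | nil => simp [Walk.edges] at he
  | @cons a b c f h p ih =>
    simp only [Walk.IsPath, Walk.support, List.nodup_cons] at hp
    cases p with
    | nil =>
      simp only [Walk.edges, List.mem_singleton] at he he'
      rw [he, he']
    | @cons _ d _ g hg q =>
      have hf : c ∉ G.ends f := by
        rw [h, Sym2.mem_iff]
        rintro (rfl | rfl)
        · exact hp.1 (Walk.end_mem _)
        · have := hp.2
          simp only [Walk.support, List.nodup_cons] at this
          exact this.1 q.end_mem
      have key : ∀ k, k ∈ (Walk.cons f h (Walk.cons g hg q)).edges → c ∈ G.ends k →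
          k ∈ (Walk.cons g hg q).edges := by
        intro k hk hck
        rw [Walk.edges, List.mem_cons] at hk
        rcases hk with rfl | hk
        · exact absurd hck hf
        · exact hk
      exact ih hp.2 (key _ he hu) (key _ he' hu') hu hu'

/-- Three vertices in a connected piece are joined to a common centre by edge-disjoint paths. -/
theorem spider {D : Set G.E} {c₁ c₂ c₃ : G.V} (h₂ : G.Reach D c₁ c₂) (h₃ : G.Reach D c₃ c₁) :
    ∃ x, ∃ X₁ X₂ X₃ : Set G.E, X₁ ⊆ D ∧ X₂ ⊆ D ∧ X₃ ⊆ D ∧ (∀ e ∈ X₁, e ∉ X₂) ∧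
      (∀ e ∈ X₁, e ∉ X₃) ∧ (∀ e ∈ X₂, e ∉ X₃) ∧
      G.Reach X₁ x c₁ ∧ G.Reach X₂ x c₂ ∧ G.Reach X₃ x c₃ := by
  obtain ⟨p, hp, hpD⟩ := h₂.exists_path
  have key : ∃ x ∈ p.support, ∃ X : Set G.E, X ⊆ D ∧ (∀ e ∈ X, e ∉ p.edges) ∧
      G.Reach X c₃ x := by
    induction h₃ using Relation.ReflTransGen.head_induction_on with
    | refl => exact ⟨c₁, p.start_mem, ∅, by simp, by simp, Reach.refl _ _⟩
    | @head a c hac _ ih =>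
      obtain ⟨x, hx, X, hXD, hXp, hr⟩ := ih
      obtain ⟨e, he, hee⟩ := hac
      by_cases ha : a ∈ p.support
      · exact ⟨a, ha, ∅, by simp, by simp, Reach.refl _ _⟩
      · refine ⟨x, hx, insert e X, Set.insert_subset he hXD, ?_, ?_⟩
        · rintro f (rfl | hf)
          · exact fun hf => ha (p.mem_support_of_edge hf (by simp [hee]))
          · exact hXp f hf
        · exact (Reach.single (Set.mem_insert _ _) hee).trans (hr.mono (Set.subset_insert _ _))
  obtain ⟨x, hx, X, hXD, hXp, hr⟩ := key
  obtain ⟨T₁, T₂, hd, h1, h2, r1, r2⟩ := p.split hp hx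
  exact ⟨x, T₁, T₂, X, fun e he => hpD _ (h1 e he), fun e he => hpD _ (h2 e he), hXD, hd,
    fun e he he' => hXp e he' (h1 e he), fun e he he' => hXp e he' (h2 e he), r1.symm, r2, hr.symm⟩

theorem immerses_K33 (a c : Fin 3 → G.V) (ha : Function.Injective a) (hc : Function.Injective c)
    (hac : ∀ i j, a i ≠ c j) (U : Fin 3 → Fin 3 → Set G.E)
    (hU : ∀ i j i' j' e, e ∈ U i j → e ∈ U i' j' → i = i' ∧ j = j')
    (hr : ∀ i j, G.Reach (U i j) (a i) (c j)) : Immerses K33 G := by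
  choose p hp hpe using fun i j => (hr i j).exists_path
  exact ⟨{
    vmap := Sum.elim a c
    inj := ha.sumElim hc hac
    pstart := fun e => a e.1
    pend := fun e => c e.2
    walk := fun e => p e.1 e.2
    ends_eq := fun e => by simp [K33]
    isPath := fun e => hp e.1 e.2
    edgeDisj := fun e e' hne f hf hf' => hne (by
      obtain ⟨h1, h2⟩ := hU _ _ _ _ f (hpe _ _ f hf) (hpe _ _ f hf')
      exact Prod.ext h1 h2) }⟩

/-- A symmetric repackaging of a subdivision of `K_5`. -/
structure Model (G : Multigraph) where
  b : Fin 5 → G.V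
  inj : Function.Injective b
  T : Sym2 (Fin 5) → Set G.E
  VS : Sym2 (Fin 5) → Set G.V
  split : ∀ i j, i ≠ j → ∀ x ∈ VS s(i, j), ∃ T₁ T₂ : Set G.E, (∀ e ∈ T₁, e ∉ T₂) ∧
    T₁ ⊆ T s(i, j) ∧ T₂ ⊆ T s(i, j) ∧ G.Reach T₁ (b i) x ∧ G.Reach T₂ x (b j)
  memVS : ∀ q, ∀ e ∈ T q, ∀ y ∈ G.ends e, y ∈ VS q
  interVS : ∀ q q', q ≠ q' → ∀ y ∈ VS q, y ∈ VS q' → ∃ w, y = b w ∧ w ∈ q ∧ w ∈ q'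
  uniq : ∀ i j, i ≠ j → ∀ e ∈ T s(i, j), ∀ e' ∈ T s(i, j), b i ∈ G.ends e → b i ∈ G.ends e' →
    e = e'
  disj : ∀ q q' e, e ∈ T q → e ∈ T q' → q = q'
  bmem : ∀ i j, i ≠ j → b i ∈ VS s(i, j)

theorem exists_model (S : SubdivisionData K5 G) : Nonempty (Model G) := by
  have hex : ∀ i j : Fin 5, i ≠ j → ∃ p : K5.E, K5.ends p = s(i, j) := by
    intro i j hij
    rcases lt_or_gt_of_ne hij with h | h
    · exact ⟨⟨(i, j), h⟩, rfl⟩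
    · exact ⟨⟨(j, i), h⟩, Sym2.eq_swap⟩
  have hinj : ∀ p p' : K5.E, K5.ends p = K5.ends p' → p = p' := by
    rintro ⟨⟨a, b⟩, h⟩ ⟨⟨a', b'⟩, h'⟩ he
    simp only [K5, Sym2.eq_iff] at he h h'
    apply Subtype.ext
    apply Prod.ext
    · simp only; omega
    · simp only; omega
  have hends : ∀ p : K5.E, ∀ i j, K5.ends p = s(i, j) →
      (S.pstart p = S.vmap i ∧ S.pend p = S.vmap j) ∨
      (S.pstart p = S.vmap j ∧ S.pend p = S.vmap i) := by
    intro p i j h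
    have := S.ends_eq p
    rw [h, Sym2.map_mk, Sym2.eq_iff] at this
    exact this
  refine ⟨{
    b := S.vmap
    inj := S.inj
    T := fun q => {e | ∃ p : K5.E, K5.ends p = q ∧ e ∈ (S.walk p).edges}
    VS := fun q => {x | ∃ p : K5.E, K5.ends p = q ∧ x ∈ (S.walk p).support}
    split := ?_
    memVS := ?_
    interVS := ?_
    uniq := ?_
    disj := ?_
    bmem := ?_ }⟩
  · rintro i j hij x ⟨p, hp, hx⟩
    obtain ⟨T₁, T₂, hd, h1, h2, r1, r2⟩ := (S.walk p).split (S.isPath p) hx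
    rcases hends p i j hp with ⟨hs, he⟩ | ⟨hs, he⟩
    · exact ⟨T₁, T₂, hd, fun e he => ⟨p, hp, h1 e he⟩, fun e he => ⟨p, hp, h2 e he⟩,
        hs ▸ r1, he ▸ r2⟩
    · exact ⟨T₂, T₁, fun e h h' => hd e h' h, fun e he => ⟨p, hp, h2 e he⟩,
        fun e he => ⟨p, hp, h1 e he⟩, he ▸ r2.symm, hs ▸ r1.symm⟩
  · rintro q e ⟨p, hp, he⟩ y hy
    exact ⟨p, hp, (S.walk p).mem_support_of_edge he hy⟩
  · rintro q q' hq y ⟨p, hp, hy⟩ ⟨p', hp', hy'⟩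
    obtain ⟨w, hw, h1, h2⟩ := S.vtxDisj p p' (by rintro rfl; exact hq (hp.symm.trans hp')) y hy hy'
    exact ⟨w, hw, hp ▸ h1, hp' ▸ h2⟩
  · rintro i j hij e ⟨p, hp, he⟩ e' ⟨p', hp', he'⟩ hi hi'
    obtain rfl := hinj p p' (hp.trans hp'.symm)
    rcases hends p i j hp with ⟨hs, -⟩ | ⟨-, hs⟩
    · exact (S.walk p).start_edge_unique (S.isPath p) he he' (hs ▸ hi) (hs ▸ hi')
    · exact (S.walk p).end_edge_unique (S.isPath p) he he' (hs ▸ hi) (hs ▸ hi')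
  · rintro q q' e ⟨p, hp, he⟩ ⟨p', hp', he'⟩
    by_contra hq
    exact S.edgeDisj p p' (by rintro rfl; exact hq (hp.symm.trans hp')) he he'
  · rintro i j hij
    obtain ⟨p, hp⟩ := hex i j hij
    refine ⟨p, hp, ?_⟩
    rcases hends p i j hp with ⟨hs, -⟩ | ⟨-, hs⟩
    · exact hs ▸ (S.walk p).start_mem
    · exact hs ▸ (S.walk p).end_mem

namespace Model

variable (M : Model G)

theorem reach {i j : Fin 5} (h : i ≠ j) : G.Reach (M.T s(i, j)) (M.b i) (M.b j) := by
  obtain ⟨T₁, T₂, -, h1, h2, r1, r2⟩ := M.split i j h _ (M.bmem i j h)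
  exact (r1.mono h1).trans (r2.mono h2)

/-- A vertex outside of the branch vertices with three suitable edge-disjoint trails
to three branch vertices. -/
theorem master (i j k l m : Fin 5) (hd : [i, j, k, l, m].Nodup) (x : G.V)
    (hx : ∀ n, x ≠ M.b n) (X₁ X₂ X₃ : Set G.E)
    (h12 : ∀ e ∈ X₁, e ∉ X₂) (h13 : ∀ e ∈ X₁, e ∉ X₃) (h23 : ∀ e ∈ X₂, e ∉ X₃)
    (hX : ∀ e, e ∈ X₁ ∨ e ∈ X₂ ∨ e ∈ X₃ → ∀ y z, (y = l ∨ y = m) → (z = i ∨ z = j ∨ z = k) →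
      e ∉ M.T s(y, z))
    (r1 : G.Reach X₁ x (M.b i)) (r2 : G.Reach X₂ x (M.b j)) (r3 : G.Reach X₃ x (M.b k)) :
    Immerses K33 G := by
  simp only [List.nodup_cons, List.mem_cons, List.not_mem_nil, or_false, not_or,
    not_false_eq_true, List.nodup_nil, and_true] at hd
  obtain ⟨⟨hij, hik, hil, him⟩, ⟨hjk, hjl, hjm⟩, ⟨hkl, hkm⟩, hlm⟩ := hd
  have hb : ∀ {y z}, y ≠ z → M.b y ≠ M.b z := fun h h' => h (M.inj h')
  have hT : ∀ {y z y' z' e}, e ∈ M.T s(y, z) → e ∈ M.T s(y', z') →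
      (y = y' ∧ z = z') ∨ (y = z' ∧ z = y') := fun h h' => by
    simpa [Sym2.eq_iff] using M.disj _ _ _ h h'
  refine immerses_K33 ![x, M.b l, M.b m] ![M.b i, M.b j, M.b k] ?_ ?_ ?_
    ![![X₁, X₂, X₃], ![M.T s(l, i), M.T s(l, j), M.T s(l, k)],
      ![M.T s(m, i), M.T s(m, j), M.T s(m, k)]] ?_ ?_
  · intro p q h
    fin_cases p <;> fin_cases q <;> simp_all [M.inj.eq_iff, eq_comm]
  · intro p q h
    fin_cases p <;> fin_cases q <;> simp_all [M.inj.eq_iff, eq_comm]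
  · intro p q h
    fin_cases p <;> fin_cases q <;> simp_all [M.inj.eq_iff, eq_comm]
  · intro p q p' q' e h h'
    fin_cases p <;> fin_cases q <;> fin_cases p' <;> fin_cases q' <;>
      simp at h h' ⊢ <;> grind
  · intro p q
    fin_cases p <;> fin_cases q
    · exact r1
    · exact r2
    · exact r3
    · exact M.reach (Ne.symm hil)
    · exact M.reach (Ne.symm hjl)
    · exact M.reach (Ne.symm hkl)
    · exact M.reach (Ne.symm him)
    · exact M.reach (Ne.symm hjm)
    · exact M.reach (Ne.symm hkm)

theorem exists_rest (i j k : Fin 5) : i ≠ j → i ≠ k → j ≠ k → ∃ l m, [i, j, k, l, m].Nodup := by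
  revert i j k; decide

theorem caseI {i j k : Fin 5} (hij : i ≠ j) (hik : i ≠ k) (hjk : j ≠ k) {x w : G.V}
    (hx : ∀ n, x ≠ M.b n) (hxV : x ∈ M.VS s(i, j)) (hw : w ∈ M.VS s(i, k)) {D : Set G.E}
    (hD : ∀ e ∈ D, ∀ y z, y ≠ z → e ∉ M.T s(y, z)) (hr : G.Reach D x w) : Immerses K33 G := by
  obtain ⟨l, m, hd⟩ := exists_rest i j k hij hik hjk
  obtain ⟨A, A', hA, hAT, hAT', rA, rA'⟩ := M.split i j hij x hxV
  obtain ⟨B, B', hB, hBT, hBT', rB, rB'⟩ := M.split i k hik w hw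
  have hT : ∀ {y z y' z' e}, e ∈ M.T s(y, z) → e ∈ M.T s(y', z') →
      (y = y' ∧ z = z') ∨ (y = z' ∧ z = y') := fun h h' => by
    simpa [Sym2.eq_iff] using M.disj _ _ _ h h'
  refine M.master i j k l m hd x hx A A' (D ∪ B') hA ?_ ?_ ?_ rA.symm rA'
    ((hr.mono Set.subset_union_left).trans (rB'.mono Set.subset_union_right))
  · rintro e he (he' | he')
    · exact hD e he' i j hij (hAT he)
    · have := hT (hAT he) (hBT' he')
      grind
  · rintro e he (he' | he')
    · exact hD e he' i j hij (hAT' he)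
    · have := hT (hAT' he) (hBT' he')
      grind
  · simp only [List.nodup_cons, List.mem_cons, List.not_mem_nil, or_false, not_or,
      not_false_eq_true, List.nodup_nil, and_true] at hd
    rintro e (he | he | he | he) y z hy hz heT
    · have := hT (hAT he) heT
      grind
    · have := hT (hAT' he) heT
      grind
    · exact hD e he y z (by grind) heT
    · have := hT (hBT' he) heT
      grind

theorem caseII {i j k l : Fin 5} (hij : i ≠ j) (hik : i ≠ k) (hil : i ≠ l) (hjk : j ≠ k)
    (hjl : j ≠ l) (hkl : k ≠ l) {x w : G.V}
    (hx : ∀ n, x ≠ M.b n) (hxV : x ∈ M.VS s(i, j)) (hw : w ∈ M.VS s(k, l))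
    (hwb : ∀ n, w ≠ M.b n) {D : Set G.E}
    (hD : ∀ e ∈ D, ∀ y z, y ≠ z → e ∉ M.T s(y, z)) (hr : G.Reach D x w) : Immerses K33 G := by
  obtain ⟨A, A', hA, hAT, hAT', rA, rA'⟩ := M.split i j hij x hxV
  obtain ⟨B, B', hB, hBT, hBT', rB, rB'⟩ := M.split k l hkl w hw
  have hT : ∀ {y z y' z' e}, e ∈ M.T s(y, z) → e ∈ M.T s(y', z') →
      (y = y' ∧ z = z') ∨ (y = z' ∧ z = y') := fun h h' => by
    simpa [Sym2.eq_iff] using M.disj _ _ _ h h'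
  have hxw : x ≠ w := by
    rintro rfl
    obtain ⟨n, hn, -⟩ := M.interVS s(i, j) s(k, l) (by simp [*]) x hxV hw
    exact hx n hn
  have hAT1 : ∀ e ∈ A, e ∈ M.T s(i, j) := fun e he => hAT he
  have hAT2 : ∀ e ∈ A', e ∈ M.T s(i, j) := fun e he => hAT' he
  have hBT1 : ∀ e ∈ B, e ∈ M.T s(k, l) := fun e he => hBT he
  have hBT2 : ∀ e ∈ B', e ∈ M.T s(k, l) := fun e he => hBT' he
  refine immerses_K33 ![x, M.b k, M.b l] ![w, M.b i, M.b j] ?_ ?_ ?_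
    ![![D, A, A'], ![B, M.T s(k, i), M.T s(k, j)], ![B', M.T s(l, i), M.T s(l, j)]] ?_ ?_
  · intro p q h
    fin_cases p <;> fin_cases q <;> simp_all [M.inj.eq_iff, eq_comm]
  · intro p q h
    fin_cases p <;> fin_cases q <;> simp_all [M.inj.eq_iff, eq_comm]
  · intro p q h
    fin_cases p <;> fin_cases q <;> simp_all [M.inj.eq_iff, eq_comm]
  · intro p q p' q' e h h'
    fin_cases p <;> fin_cases q <;> fin_cases p' <;> fin_cases q' <;>
      simp at h h' ⊢ <;> grind
  · intro p q
    fin_cases p <;> fin_cases q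
    · exact hr
    · exact rA.symm
    · exact rA'
    · exact rB
    · exact M.reach (Ne.symm hik)
    · exact M.reach (Ne.symm hjk)
    · exact rB'.symm
    · exact M.reach (Ne.symm hil)
    · exact M.reach (Ne.symm hjl)

theorem exists_third (i j : Fin 5) : ∃ k, i ≠ k ∧ j ≠ k := by
  revert i j; decide

/-- An edge of a cut. -/
theorem mem_cut_iff {A : Finset G.V} {e : G.E} :
    e ∈ G.cut A ↔ ∃ u ∈ A, ∃ v, v ∉ A ∧ G.ends e = s(u, v) := by
  simp [cut]

theorem of_interior (h3 : G.EdgeConnGe 3) {i j : Fin 5} (hij : i ≠ j) {x : G.V}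
    (hx : ∀ n, x ≠ M.b n) (hxV : x ∈ M.VS s(i, j)) : Immerses K33 G := by
  classical
  set D : Set G.E := {e | ∀ y z, y ≠ z → e ∉ M.T s(y, z)} with hDdef
  have hD : ∀ e ∈ D, ∀ y z, y ≠ z → e ∉ M.T s(y, z) := fun e he => he
  have key : ∃ a w, a ∈ M.VS s(i, j) ∧ (∀ n, a ≠ M.b n) ∧ G.Reach D a w ∧
      (∃ k l, k ≠ l ∧ w ∈ M.VS s(k, l)) ∧ (w ∈ M.VS s(i, j) → ∃ n, w = M.b n) := by
    by_contra hcon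
    push Not at hcon
    let R : Finset G.V := Finset.univ.filter fun y =>
      ∃ a, a ∈ M.VS s(i, j) ∧ (∀ n, a ≠ M.b n) ∧ G.Reach D a y
    have hR : ∀ y, y ∈ R ↔ ∃ a, a ∈ M.VS s(i, j) ∧ (∀ n, a ≠ M.b n) ∧ G.Reach D a y := by
      intro y; simp [R]
    have hRV : ∀ y ∈ R, ∀ k l, k ≠ l → y ∈ M.VS s(k, l) →
        y ∈ M.VS s(i, j) ∧ ∀ n, y ≠ M.b n := by
      intro y hy k l hkl hyV
      obtain ⟨a, ha, hab, hr⟩ := (hR y).1 hy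
      exact hcon a y ha hab hr ⟨k, l, hkl, hyV⟩
    have hcard := h3 R ⟨x, (hR x).2 ⟨x, hxV, hx, Reach.refl _ _⟩⟩ (by
      intro hu
      have : M.b i ∈ R := by rw [hu]; exact Finset.mem_univ _
      exact (hRV _ this i j hij (M.bmem i j hij)).2 i rfl)
    have hcut : ∀ e ∈ G.cut R, e ∈ M.T s(i, j) ∧ (M.b i ∈ G.ends e ∨ M.b j ∈ G.ends e) := by
      intro e he
      obtain ⟨u, hu, v, hv, hee⟩ := mem_cut_iff.1 he
      have heD : e ∉ D := by
        intro heD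
        obtain ⟨a, ha, hab, hr⟩ := (hR u).1 hu
        exact hv ((hR v).2 ⟨a, ha, hab, hr.trans (Reach.single heD hee)⟩)
      simp only [hDdef, Set.mem_ofPred_eq, not_forall, not_not] at heD
      obtain ⟨k, l, hkl, heT⟩ := heD
      have huV := M.memVS _ e heT u (by simp [hee])
      have hvV := M.memVS _ e heT v (by simp [hee])
      obtain ⟨huV', hub⟩ := hRV u hu k l hkl huV
      have hq : s(k, l) = s(i, j) := by
        by_contra hq
        obtain ⟨n, hn, -⟩ := M.interVS _ _ hq u huV huV'
        exact hub n hn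
      rw [hq] at heT hvV
      refine ⟨heT, ?_⟩
      have : ∃ n, v = M.b n := by
        by_contra hvb
        push Not at hvb
        exact hv ((hR v).2 ⟨v, hvV, hvb, Reach.refl _ _⟩)
      obtain ⟨n, rfl⟩ := this
      by_cases hni : n = i
      · left; simp [hee, hni]
      · by_cases hnj : n = j
        · right; simp [hee, hnj]
        · exfalso
          obtain ⟨w, hw, h1, h2⟩ := M.interVS s(n, i) s(i, j)
            (by simp [*]) _ (M.bmem n i hni) hvV
          have := M.inj hw
          subst this
          simp [hni, hnj] at h2
    obtain ⟨e₁, e₂, e₃, h1, h2, h3, h12, h13, h23⟩ := Finset.two_lt_card_iff.1 hcard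
    have ui := M.uniq i j hij
    have uj := M.uniq j i hij.symm
    rw [Sym2.eq_swap] at uj
    obtain ⟨t1, b1⟩ := hcut _ h1
    obtain ⟨t2, b2⟩ := hcut _ h2
    obtain ⟨t3, b3⟩ := hcut _ h3
    rcases b1 with b1 | b1 <;> rcases b2 with b2 | b2 <;> rcases b3 with b3 | b3 <;>
      first
      | exact h12 (ui _ t1 _ t2 b1 b2)
      | exact h12 (uj _ t1 _ t2 b1 b2)
      | exact h13 (ui _ t1 _ t3 b1 b3)
      | exact h13 (uj _ t1 _ t3 b1 b3)
      | exact h23 (ui _ t2 _ t3 b2 b3)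
      | exact h23 (uj _ t2 _ t3 b2 b3)
  obtain ⟨a, w, haV, hab, hr, ⟨k, l, hkl, hwV⟩, hw⟩ := key
  have haV' : a ∈ M.VS s(j, i) := by rw [Sym2.eq_swap]; exact haV
  have hwV' : w ∈ M.VS s(l, k) := by rw [Sym2.eq_swap]; exact hwV
  by_cases hwb : ∃ n, w = M.b n
  · obtain ⟨n, rfl⟩ := hwb
    obtain ⟨k', hik, hjk⟩ := exists_third i j
    by_cases hni : n = i
    · subst hni
      exact M.caseI hij hik hjk hab haV (M.bmem _ _ hik) hD hr
    · by_cases hnj : n = j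
      · subst hnj
        exact M.caseI hij.symm hjk hik hab haV' (M.bmem _ _ hjk) hD hr
      · exact M.caseI hij (Ne.symm hni) (Ne.symm hnj) hab haV
          (by rw [Sym2.eq_swap]; exact M.bmem _ _ hni) hD hr
  · have hwn : w ∉ M.VS s(i, j) := fun h => hwb (hw h)
    push Not at hwb
    by_cases h1 : k = i
    · subst h1
      exact M.caseI hij hkl (by rintro rfl; exact hwn hwV) hab haV hwV hD hr
    by_cases h2 : k = j
    · subst h2
      exact M.caseI hij.symm hkl (by rintro rfl; exact hwn hwV') hab haV' hwV hD hr
    by_cases h3 : l = i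
    · subst h3
      exact M.caseI hij (Ne.symm h1) (Ne.symm h2) hab haV hwV' hD hr
    by_cases h4 : l = j
    · subst h4
      exact M.caseI hij.symm (Ne.symm h2) (Ne.symm h1) hab haV' hwV' hD hr
    exact M.caseII hij (Ne.symm h1) (Ne.symm h3) (Ne.symm h2) (Ne.symm h4) hkl hab haV hwV hwb
      hD hr

theorem exists_triple (i j k : Fin 5) : ∃ q r, (i ≠ q ∧ i ≠ r ∧ q ≠ r) ∧
    (j = i ∨ j = q) ∧ (k = i ∨ k = q ∨ k = r) := by
  revert i j k; decide

theorem of_no_interior (h3 : G.EdgeConnGe 3) (hn : 6 ≤ Fintype.card G.V)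
    (hVS : ∀ y z, y ≠ z → ∀ v ∈ M.VS s(y, z), ∃ n, v = M.b n) : Immerses K33 G := by
  classical
  obtain ⟨x₀, hx₀⟩ : ∃ x₀, ∀ n, x₀ ≠ M.b n := by
    by_contra hcon
    push Not at hcon
    have := Fintype.card_le_of_surjective M.b fun v => (hcon v).imp fun n h => h.symm
    simp at this
    omega
  set D : Set G.E := {e | ∀ y ∈ G.ends e, ∀ n, y ≠ M.b n} with hDdef
  have hDb : ∀ u v, G.Reach D u v → (∀ n, u ≠ M.b n) → ∀ n, v ≠ M.b n := by
    intro u v h hu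
    rcases Relation.ReflTransGen.cases_tail h with h | ⟨c, -, e, he, hee⟩
    · rw [h]; exact hu
    · exact he v (by simp [hee])
  let R : Finset G.V := Finset.univ.filter fun y => G.Reach D x₀ y
  have hR : ∀ y, y ∈ R ↔ G.Reach D x₀ y := by intro y; simp [R]
  have hcard := h3 R ⟨x₀, (hR _).2 (Reach.refl _ _)⟩ (by
      intro hu
      have : M.b 0 ∈ R := by rw [hu]; exact Finset.mem_univ _
      exact hDb _ _ ((hR _).1 this) hx₀ 0 rfl)
  have hcut : ∀ e ∈ G.cut R, e ∉ D ∧ ∃ u n, G.Reach D x₀ u ∧ G.ends e = s(u, M.b n) ∧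
      ∀ y z, y ≠ z → e ∉ M.T s(y, z) := by
    intro e he
    obtain ⟨u, hu, v, hv, hee⟩ := mem_cut_iff.1 he
    rw [hR] at hu hv
    have heD : e ∉ D := fun heD => hv (hu.trans (Reach.single heD hee))
    have hub := hDb _ _ hu hx₀
    have : ∃ n, v = M.b n := by
      by_contra hvb
      push Not at hvb
      apply heD
      intro y hy
      rw [hee, Sym2.mem_iff] at hy
      rcases hy with rfl | rfl
      · exact hub
      · exact hvb
    obtain ⟨n, rfl⟩ := this
    refine ⟨heD, u, n, hu, hee, ?_⟩
    intro y z hyz heT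
    obtain ⟨n', hn'⟩ := hVS y z hyz u (M.memVS _ e heT u (by simp [hee]))
    exact hub n' hn'
  obtain ⟨e₁, e₂, e₃, h1, h2, h3, h12, h13, h23⟩ := Finset.two_lt_card_iff.1 hcard
  obtain ⟨d1, c₁, i, r1, hc1, t1⟩ := hcut _ h1
  obtain ⟨d2, c₂, j, r2, hc2, t2⟩ := hcut _ h2
  obtain ⟨d3, c₃, k, r3, hc3, t3⟩ := hcut _ h3
  obtain ⟨x, X₁, X₂, X₃, s1, s2, s3, d12, d13, d23, q1, q2, q3⟩ :=
    spider (r1.symm.trans r2) (r3.symm.trans r1)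
  have hxb : ∀ n, x ≠ M.b n := hDb _ _ (r1.trans (q1.mono s1).symm) hx₀
  have hDT : ∀ e ∈ D, ∀ y z, y ≠ z → e ∉ M.T s(y, z) := by
    intro e he y z hyz heT
    induction hee : G.ends e using Sym2.ind with
    | _ u v =>
      obtain ⟨n, hn⟩ := hVS y z hyz u (M.memVS _ e heT u (by simp [hee]))
      exact he u (by simp [hee]) n hn
  obtain ⟨q, r, ⟨hiq, hir, hqr⟩, hj, hk⟩ := exists_triple i j k
  obtain ⟨l, m, hd⟩ := exists_rest i q r hiq hir hqr
  have hT : ∀ {y z y' z' e}, e ∈ M.T s(y, z) → e ∈ M.T s(y', z') →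
      (y = y' ∧ z = z') ∨ (y = z' ∧ z = y') := fun h h' => by
    simpa [Sym2.eq_iff] using M.disj _ _ _ h h'
  have w1 : G.Reach (insert e₁ X₁) x (M.b i) :=
    (q1.mono (Set.subset_insert _ _)).trans (Reach.single (Set.mem_insert _ _) hc1)
  have w2 : G.Reach (insert e₂ X₂) x (M.b j) :=
    (q2.mono (Set.subset_insert _ _)).trans (Reach.single (Set.mem_insert _ _) hc2)
  have w3 : G.Reach (insert e₃ X₃) x (M.b k) :=
    (q3.mono (Set.subset_insert _ _)).trans (Reach.single (Set.mem_insert _ _) hc3)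
  have w2' : G.Reach (insert e₂ X₂ ∪ M.T s(i, q)) x (M.b q) := by
    refine (w2.mono Set.subset_union_left).trans ?_
    rcases hj with rfl | rfl
    · exact (M.reach hiq).mono Set.subset_union_right
    · exact Reach.refl _ _
  have w3' : G.Reach (insert e₃ X₃ ∪ (M.T s(i, r) ∪ M.T s(q, r))) x (M.b r) := by
    refine (w3.mono Set.subset_union_left).trans ?_
    refine Reach.mono (S := M.T s(i, r) ∪ M.T s(q, r)) ?_ Set.subset_union_right
    rcases hk with rfl | rfl | rfl
    · exact (M.reach hir).mono Set.subset_union_left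
    · exact (M.reach hqr).mono Set.subset_union_right
    · exact Reach.refl _ _
  have f1 : ∀ e ∈ insert e₁ X₁, ∀ y z, y ≠ z → e ∉ M.T s(y, z) := by
    rintro e (rfl | he)
    · exact t1
    · exact hDT e (s1 he)
  have f2 : ∀ e ∈ insert e₂ X₂, ∀ y z, y ≠ z → e ∉ M.T s(y, z) := by
    rintro e (rfl | he)
    · exact t2
    · exact hDT e (s2 he)
  have f3 : ∀ e ∈ insert e₃ X₃, ∀ y z, y ≠ z → e ∉ M.T s(y, z) := by
    rintro e (rfl | he)
    · exact t3
    · exact hDT e (s3 he)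
  have g12 : ∀ e ∈ insert e₁ X₁, e ∉ insert e₂ X₂ := by
    rintro e (rfl | he) (rfl | he')
    · exact h12 rfl
    · exact d1 (s2 he')
    · exact d2 (s1 he)
    · exact d12 e he he'
  have g13 : ∀ e ∈ insert e₁ X₁, e ∉ insert e₃ X₃ := by
    rintro e (rfl | he) (rfl | he')
    · exact h13 rfl
    · exact d1 (s3 he')
    · exact d3 (s1 he)
    · exact d13 e he he'
  have g23 : ∀ e ∈ insert e₂ X₂, e ∉ insert e₃ X₃ := by
    rintro e (rfl | he) (rfl | he')
    · exact h23 rfl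
    · exact d2 (s3 he')
    · exact d3 (s2 he)
    · exact d23 e he he'
  refine M.master i q r l m hd x hxb _ _ _ ?_ ?_ ?_ ?_ w1 w2' w3'
  · rintro e he (he' | he')
    · exact g12 e he he'
    · exact f1 e he _ _ hiq he'
  · rintro e he (he' | he' | he')
    · exact g13 e he he'
    · exact f1 e he _ _ hir he'
    · exact f1 e he _ _ hqr he'
  · rintro e (he | he) (he' | he' | he')
    · exact g23 e he he'
    · exact f2 e he _ _ hir he'
    · exact f2 e he _ _ hqr he'
    · exact f3 e he' _ _ hiq he
    · have := hT he he'
      grind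
    · have := hT he he'
      grind
  · simp only [List.nodup_cons, List.mem_cons, List.not_mem_nil, or_false, not_or,
      not_false_eq_true, List.nodup_nil, and_true] at hd
    rintro e he y z hy hz heT
    have hyz : y ≠ z := by grind
    rcases he with he | (he | he) | (he | he | he)
    · exact f1 e he y z hyz heT
    · exact f2 e he y z hyz heT
    · have := hT he heT
      grind
    · exact f3 e he y z hyz heT
    · have := hT he heT
      grind
    · have := hT he heT
      grind

theorem immerses (M : Model G) (h3 : G.EdgeConnGe 3) (hn : 6 ≤ Fintype.card G.V) : Immerses K33 G := by
  by_cases h : ∀ y z, y ≠ z → ∀ v ∈ M.VS s(y, z), ∃ n, v = M.b n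
  · exact M.of_no_interior h3 hn h
  · push Not at h
    obtain ⟨y, z, hyz, v, hv, hvb⟩ := h
    exact M.of_interior h3 hyz hvb hv

end Model

end Helpers

end Multigraph

open Multigraph in
/-- If `G` is a 3-edge-connected non-planar graph with at least 6 vertices,
then `G` contains an immersion of `K_{3,3}`. -/
theorem k33_immersion_of_nonplanar (G : Multigraph)
    (h3ec : G.EdgeConnGe 3) (hnp : ¬ G.Planar) (hn : 6 ≤ Fintype.card G.V) :
    Immerses K33 G := by
  by_cases h : ContainsSubdivision K33 G
  · obtain ⟨S⟩ := h
    exact ⟨S.toImmersionData⟩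
  · have h5 : ContainsSubdivision K5 G := by
      by_contra h5
      exact hnp ⟨h5, h⟩
    obtain ⟨S⟩ := h5
    obtain ⟨M⟩ := exists_model S
    exact M.immerses h3ec hn
end

section
/- If a graph G contains K_5 as a subgraph on vertex set S and contains a vertex v ∉ S with three pairwise edge-disjoint paths from v to S (internally disjoint from S in their interiors appropriately, i.e., paths ending at first hit of S), then G contains an immersion of K_{3,3}. -/
namespace Multigraph

theorem Walk.exists_snoc {G : Multigraph} {u v : G.V} (p : G.Walk u v) (w : G.V) (e : G.E)
    (h : G.ends e = s(v, w)) :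
    ∃ q : G.Walk u w, q.support = p.support ++ [w] ∧ q.edges = p.edges ++ [e] := by
  induction p with
  | nil v => exact ⟨.cons e h (.nil w), rfl, rfl⟩
  | cons e' h' p ih =>
    obtain ⟨q, h1, h2⟩ := ih h
    exact ⟨.cons e' h' q, by simp [Walk.support, h1], by simp [Walk.edges, h2]⟩

theorem Walk.start_mem_support {G : Multigraph} {u v : G.V} (p : G.Walk u v) :
    u ∈ p.support := by
  cases p <;> simp [Walk.support]

theorem Walk.mem_support_of_mem_edges {G : Multigraph} {u v : G.V} (p : G.Walk u v)
    (e : G.E) (he : e ∈ p.edges) (x : G.V) (hx : x ∈ G.ends e) : x ∈ p.support := by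
  induction p with
  | nil v => simp [Walk.edges] at he
  | cons e' h' p ih =>
    simp only [Walk.edges, List.mem_cons] at he
    simp only [Walk.support, List.mem_cons]
    rcases he with rfl | he
    · rw [h', Sym2.mem_iff] at hx
      rcases hx with rfl | rfl
      · exact Or.inl rfl
      · exact Or.inr p.start_mem_support
    · exact Or.inr (ih he)

set_option synthInstance.maxSize 4096 in
set_option synthInstance.maxHeartbeats 400000 in
theorem exists_targets : ∀ a b c : Fin 5, ∃ x y z : Fin 5, x ≠ y ∧ x ≠ z ∧ y ≠ z ∧
    (a = x ∨ a = y ∨ a = z) ∧ (b = x ∨ b = y ∨ b = z) ∧ (c = x ∨ c = y ∨ c = z) ∧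
    (a = x ∨ (b ≠ x ∧ c ≠ x)) ∧ (b = y ∨ (a ≠ y ∧ c ≠ y)) ∧ (c = z ∨ (a ≠ z ∧ b ≠ z)) := by
  decide +kernel

theorem exists_rest : ∀ x y z : Fin 5, ∃ d e : Fin 5, d ≠ e ∧
    d ≠ x ∧ d ≠ y ∧ d ≠ z ∧ e ≠ x ∧ e ≠ y ∧ e ≠ z := by
  decide +kernel

theorem exists_targets' (t : Fin 3 → Fin 5) : ∃ s m : Fin 3 → Fin 5,
    Function.Injective s ∧ (∀ i, ∃ k, t i = s k) ∧ (∀ i k, t k = s i → t i = s i) ∧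
    (∀ i k, m i ≠ s k) ∧ m 1 ≠ m 2 := by
  obtain ⟨x, y, z, h1, h2, h3, ha, hb, hc, ka, kb, kc⟩ := exists_targets (t 0) (t 1) (t 2)
  obtain ⟨d, e, hde, q1, q2, q3, q4, q5, q6⟩ := exists_rest x y z
  refine ⟨![x, y, z], ![d, d, e], ?_, ?_, ?_, ?_, ?_⟩
  · intro i j
    fin_cases i <;> fin_cases j <;> simp <;> grind
  · intro i
    fin_cases i <;> simp [Fin.exists_fin_succ] <;> grind
  · intro i k
    fin_cases i <;> fin_cases k <;> simp <;> grind
  · intro i k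
    fin_cases i <;> fin_cases k <;> simp <;> assumption
  · simpa using hde

end Multigraph

open Multigraph in
/-- If `G` contains `K_5` as a subgraph on the images of `f : Fin 5 ↪ V(G)`
(with distinct edges `g i j` joining `f i` and `f j`), and contains a vertex
`v` outside this set with three pairwise edge-disjoint paths from `v` to the
set, each path meeting the set only in its final vertex, then `G` contains an
immersion of `K_{3,3}`. -/
theorem k33_of_K5_subgraph_plus_paths (G : Multigraph)
    (f : Fin 5 ↪ G.V)
    (g : {p : Fin 5 × Fin 5 // p.1 < p.2} → G.E) (hg : Function.Injective g)
    (hgends : ∀ p, G.ends (g p) = s(f p.1.1, f p.1.2))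
    (v : G.V) (hv : ∀ i, v ≠ f i)
    (t : Fin 3 → Fin 5)
    (P : ∀ i : Fin 3, G.Walk v (f (t i)))
    (hP : ∀ i, (P i).IsPath)
    (hPdisj : ∀ i j, i ≠ j → List.Disjoint (P i).edges (P j).edges)
    (hfirst : ∀ i, ∀ x ∈ (P i).support, (∃ j, x = f j) → x = f (t i)) :
    Immerses K33 G := by
  obtain ⟨s, m, hs, hts, hst, hms, hm⟩ := exists_targets' t
  have hed : ∀ a b : Fin 5, ∃ e : G.E, a ≠ b → G.ends e = s(f a, f b) := by
    intro a b
    rcases lt_trichotomy a b with h | h | h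
    · exact ⟨g ⟨(a, b), h⟩, fun _ => hgends _⟩
    · exact ⟨g ⟨(0, 1), by decide⟩, fun h' => absurd h h'⟩
    · exact ⟨g ⟨(b, a), h⟩, fun _ => by rw [hgends, Sym2.eq_swap]⟩
  choose ed hed using hed
  have hinj : ∀ a b c d, a ≠ b → c ≠ d → ed a b = ed c d →
      (a = c ∧ b = d) ∨ (a = d ∧ b = c) := by
    intro a b c d hab hcd h
    have h1 := hed a b hab
    rw [h, hed c d hcd] at h1
    simp only [Sym2.eq_iff, f.injective.eq_iff] at h1
    grind
  have hPed : ∀ i a b, a ≠ b → ed a b ∉ (P i).edges := by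
    intro i a b hab hmem
    have h1 := hfirst i (f a) ((P i).mem_support_of_mem_edges _ hmem _
      (by rw [hed a b hab]; simp)) ⟨a, rfl⟩
    have h2 := hfirst i (f b) ((P i).mem_support_of_mem_edges _ hmem _
      (by rw [hed a b hab]; simp)) ⟨b, rfl⟩
    exact hab (f.injective (h1.trans h2.symm))
  have hQ : ∀ j, ∃ Q : G.Walk v (f (s j)), Q.IsPath ∧
      ∀ e ∈ Q.edges, e ∈ (P j).edges ∨ (t j ≠ s j ∧ e = ed (t j) (s j)) := by
    intro j
    by_cases h : t j = s j
    · rw [← h]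
      exact ⟨P j, hP j, fun e he => Or.inl he⟩
    · obtain ⟨q, h1, h2⟩ := (P j).exists_snoc (f (s j)) (ed (t j) (s j)) (hed _ _ h)
      refine ⟨q, ?_, ?_⟩
      · unfold Walk.IsPath
        rw [h1]
        refine List.nodup_append.2 ⟨hP j, by simp, ?_⟩
        intro a ha b hb hab
        simp only [List.mem_singleton] at hb
        subst hab
        subst hb
        exact h (f.injective (hfirst j _ ha ⟨_, rfl⟩)).symm
      · intro e he
        rw [h2] at he
        simp only [List.mem_append, List.mem_singleton] at he
        exact he.imp_right fun h' => ⟨h, h'⟩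
  have hW : ∀ p : Fin 3 × Fin 3, ∃ Q : G.Walk (if p.1 = 0 then v else f (m p.1)) (f (s p.2)),
      Q.IsPath ∧ ∀ e ∈ Q.edges,
        (p.1 = 0 ∧ (e ∈ (P p.2).edges ∨ (t p.2 ≠ s p.2 ∧ e = ed (t p.2) (s p.2)))) ∨
        (p.1 ≠ 0 ∧ e = ed (m p.1) (s p.2)) := by
    rintro ⟨i, j⟩
    by_cases hi : i = 0
    · subst hi
      obtain ⟨Q, h1, h2⟩ := hQ j
      exact ⟨Q, h1, fun e he => Or.inl ⟨rfl, h2 e he⟩⟩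
    · refine ⟨.cons (v := f (s j)) (ed (m i) (s j))
        (by simpa only [hi, if_false] using hed _ _ (hms i j)) (.nil _), ?_, ?_⟩
      · simp [Walk.IsPath, Walk.support, hi, hms i j]
      · intro e he
        simp only [Walk.edges, List.mem_singleton] at he
        exact Or.inr ⟨hi, he⟩
  choose W hWp hWe using hW
  have hm' : ∀ i k : Fin 3, i ≠ 0 → k ≠ 0 → m i = m k → i = k := by
    intro i k
    fin_cases i <;> fin_cases k <;> simp [hm, hm.symm]
  refine ⟨⟨Sum.elim (fun i : Fin 3 => if i = 0 then v else f (m i)) (fun j : Fin 3 => f (s j)),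
    ?_, _, _, W, ?_, hWp, ?_⟩⟩
  · rintro (i | i) (k | k) h
    · simp only [Sum.elim_inl] at h
      congr 1
      split_ifs at h with h1 h2 h2
      · rw [h1, h2]
      · exact absurd h (hv _)
      · exact absurd h.symm (hv _)
      · exact hm' _ _ h1 h2 (f.injective h)
    · simp only [Sum.elim_inl, Sum.elim_inr] at h
      split_ifs at h with h1
      · exact absurd h (hv _)
      · exact absurd (f.injective h) (hms _ _)
    · simp only [Sum.elim_inl, Sum.elim_inr] at h
      split_ifs at h with h1
      · exact absurd h.symm (hv _)
      · exact absurd (f.injective h).symm (hms _ _)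
    · simp only [Sum.elim_inr] at h
      rw [hs (f.injective h)]
  · intro e
    rfl
  · rintro ⟨i, j⟩ ⟨k, l⟩ hne e he he'
    have hmt : ∀ i k, m i ≠ t k := fun i k h => by
      obtain ⟨q, hq⟩ := hts k
      exact hms i q (h.trans hq)
    rcases hWe _ e he with ⟨h1, h2⟩ | ⟨h1, h2⟩ <;>
      rcases hWe _ e he' with ⟨h3, h4⟩ | ⟨h3, h4⟩ <;> simp only at h1 h2 h3 h4
    · have hjl : j ≠ l := by rintro rfl; exact hne (by rw [h1, h3])
      rcases h2 with h2 | ⟨h2, h2'⟩ <;> rcases h4 with h4 | ⟨h4, h4'⟩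
      · exact hPdisj j l hjl h2 h4
      · exact hPed _ _ _ h4 (h4' ▸ h2)
      · exact hPed _ _ _ h2 (h2' ▸ h4)
      · rcases hinj _ _ _ _ h2 h4 (h2'.symm.trans h4') with ⟨_, h⟩ | ⟨h, _⟩
        · exact hjl (hs h)
        · exact h4 (hst l j h)
    · rcases h2 with h2 | ⟨h2, h2'⟩
      · exact hPed _ _ _ (hms k l) (h4 ▸ h2)
      · rcases hinj _ _ _ _ h2 (hms k l) (h2'.symm.trans h4) with ⟨h, _⟩ | ⟨_, h⟩
        · exact hmt _ _ h.symm
        · exact hms _ _ h.symm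
    · rcases h4 with h4 | ⟨h4, h4'⟩
      · exact hPed _ _ _ (hms i j) (h2 ▸ h4)
      · rcases hinj _ _ _ _ h4 (hms i j) (h4'.symm.trans h2) with ⟨h, _⟩ | ⟨_, h⟩
        · exact hmt _ _ h.symm
        · exact hms _ _ h.symm
    · rcases hinj _ _ _ _ (hms i j) (hms k l) (h2.symm.trans h4) with ⟨h, h'⟩ | ⟨h, _⟩
      · exact hne (by rw [hm' _ _ h1 h3 h, hs h'])
      · exact hms _ _ h
end

section
/- Every graph in the class C5-minimal with at least 6 vertices is 2-connected, where C5-minimal consists of internally 5-edge-connected K_{3,3}-immersion-free graphs G that are not 3-regular planar and have the fewest edges among all weakly 5-edge-connected non-3-regular-planar K_{3,3}-immersion-free graphs on |V(G)| vertices. -/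
namespace Multigraph

theorem Walk.exists_drop {G : Multigraph} {u w : G.V} (p : G.Walk u w) (x : G.V)
    (hx : x ∈ p.support) (hp : p.IsPath) :
    ∃ r : G.Walk x w, r.IsPath ∧ ∀ y ∈ r.edges, y ∈ p.edges := by
  induction p with
  | nil v =>
    have : x = v := by simpa [Walk.support] using hx
    subst this
    exact ⟨Walk.nil x, hp, fun y hy => hy⟩
  | @cons a b d e h p ih =>
    by_cases hxa : x = a
    · subst hxa
      exact ⟨Walk.cons e h p, hp, fun y hy => hy⟩
    · have hx' : x ∈ p.support := by
        simp only [Walk.support, List.mem_cons] at hx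
        tauto
      have hp' : p.IsPath := by
        unfold Walk.IsPath at hp ⊢
        simp only [Walk.support, List.nodup_cons] at hp
        exact hp.2
      obtain ⟨r, h1, h2⟩ := ih hx' hp'
      exact ⟨r, h1, fun y hy => by simp [Walk.edges, h2 y hy]⟩

theorem Walk.exists_path {G : Multigraph} {u w : G.V} (p : G.Walk u w) :
    ∃ r : G.Walk u w, r.IsPath ∧ ∀ y ∈ r.edges, y ∈ p.edges := by
  induction p with
  | nil v => exact ⟨Walk.nil v, by simp [Walk.IsPath, Walk.support], fun y hy => hy⟩
  | @cons a b d e h p ih =>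
    obtain ⟨r, h1, h2⟩ := ih
    by_cases ha : a ∈ r.support
    · obtain ⟨q, h3, h4⟩ := r.exists_drop a ha h1
      exact ⟨q, h3, fun y hy => by simp [Walk.edges, h2 y (h4 y hy)]⟩
    · refine ⟨Walk.cons e h r, ?_, ?_⟩
      · unfold Walk.IsPath at h1 ⊢
        simp only [Walk.support, List.nodup_cons]
        exact ⟨ha, h1⟩
      · intro y hy
        simp only [Walk.edges, List.mem_cons] at hy ⊢
        rcases hy with hy | hy
        · exact Or.inl hy
        · exact Or.inr (h2 y hy)

theorem mem_cut_iff {G : Multigraph} {A : Finset G.V} {x : G.E} {a b : G.V}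
    (h : G.ends x = s(a, b)) : x ∈ G.cut A ↔ ((a ∈ A ∧ b ∉ A) ∨ (b ∈ A ∧ a ∉ A)) := by
  unfold cut
  simp only [Finset.mem_filter, Finset.mem_univ, true_and, h, Finset.mem_compl]
  constructor
  · rintro ⟨u, hu, w, hw, he⟩
    rcases Sym2.eq_iff.1 he with ⟨rfl, rfl⟩ | ⟨rfl, rfl⟩ <;> tauto
  · rintro (⟨h1, h2⟩ | ⟨h1, h2⟩)
    · exact ⟨a, h1, b, h2, rfl⟩
    · exact ⟨b, h1, a, h2, Sym2.eq_swap⟩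

theorem exists_ends (G : Multigraph) (x : G.E) : ∃ a b, G.ends x = s(a, b) := by
  induction h : G.ends x with
  | _ a b => exact ⟨a, b, rfl⟩

theorem cut_compl {G : Multigraph} (A : Finset G.V) : G.cut Aᶜ = G.cut A := by
  ext x
  obtain ⟨a, b, h⟩ := G.exists_ends x
  rw [mem_cut_iff h, mem_cut_iff h]
  simp only [Finset.mem_compl]
  tauto

theorem connected_of_edgeConn {G : Multigraph} (h : G.EdgeConnGe 3) : G.Connected := by
  classical
  intro u t
  by_contra hu
  let A : Finset G.V := Finset.univ.filter fun w => Nonempty (G.Walk w t)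
  have h1 : t ∈ A := by simp only [A, Finset.mem_filter]; exact ⟨Finset.mem_univ _, ⟨Walk.nil t⟩⟩
  have h2 : A ≠ Finset.univ := by
    intro hA
    have : u ∈ A := by rw [hA]; exact Finset.mem_univ _
    simp only [A, Finset.mem_filter] at this
    exact hu this.2
  have h3 := h A ⟨t, h1⟩ h2
  obtain ⟨x, hx⟩ := Finset.card_pos.1 (show 0 < (G.cut A).card by omega)
  unfold cut at hx
  simp only [Finset.mem_filter, Finset.mem_univ, true_and, Finset.mem_compl] at hx
  obtain ⟨a, ha, b, hb, he⟩ := hx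
  simp only [A, Finset.mem_filter, Finset.mem_univ, true_and] at ha hb
  obtain ⟨p⟩ := ha
  exact hb ⟨Walk.cons x (he.trans Sym2.eq_swap) p⟩

/-- Splitting off the pair of edges `e`, `f`: the edge `f` is deleted and `e` now joins
`c` and `d`. -/
abbrev splitOff (G : Multigraph) (e f : G.E) (c d : G.V) (hcd : c ≠ d) : Multigraph where
  V := G.V
  E := {x : G.E // x ≠ f}
  ends x := if x.1 = e then s(c, d) else G.ends x.1
  noLoop x := by
    split_ifs
    · simpa [Sym2.mk_isDiag_iff] using hcd
    · exact G.noLoop _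

theorem splitOff_walk {G : Multigraph} {e f : G.E} {c d v : G.V} (hcd : c ≠ d)
    (he : G.ends e = s(c, v)) (hf : G.ends f = s(d, v))
    {a b : (G.splitOff e f c d hcd).V}
    (p : (G.splitOff e f c d hcd).Walk a b) :
    ∃ r : Walk G a b, ∀ x ∈ r.edges,
      (∃ y ∈ p.edges, y.1 = x) ∨ (x = f ∧ ∃ y ∈ p.edges, y.1 = e) := by
  induction p with
  | nil w => exact ⟨Walk.nil (G := G) w, fun x hx => by simp [Walk.edges] at hx⟩
  | @cons a b w z h p ih =>
    obtain ⟨r, hr⟩ := ih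
    have key : ∀ x ∈ r.edges, (∃ y ∈ (Walk.cons z h p).edges, y.1 = x) ∨
        (x = f ∧ ∃ y ∈ (Walk.cons z h p).edges, y.1 = e) := by
      intro x hx
      rcases hr x hx with ⟨y, h1, h2⟩ | ⟨h0, y, h1, h2⟩
      · exact Or.inl ⟨y, by simp [Walk.edges, h1], h2⟩
      · exact Or.inr ⟨h0, y, by simp [Walk.edges, h1], h2⟩
    have hz : z ∈ (Walk.cons z h p).edges := by simp [Walk.edges]
    by_cases hze : z.1 = e
    · have h' : s(c, d) = s(a, b) := by
        have h2 := h
        simp only [splitOff] at h2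
        rwa [if_pos hze] at h2
      rcases Sym2.eq_iff.1 h' with ⟨h1, h2⟩ | ⟨h1, h2⟩
      · subst h1; subst h2
        refine ⟨Walk.cons e he (Walk.cons f (hf.trans Sym2.eq_swap) r), ?_⟩
        intro x hx
        simp only [Walk.edges, List.mem_cons] at hx
        rcases hx with hx | hx | hx
        · exact Or.inl ⟨z, hz, hze.trans hx.symm⟩
        · exact Or.inr ⟨hx, z, hz, hze⟩
        · exact key x hx
      · subst h1; subst h2
        refine ⟨Walk.cons f hf (Walk.cons e (he.trans Sym2.eq_swap) r), ?_⟩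
        intro x hx
        simp only [Walk.edges, List.mem_cons] at hx
        rcases hx with hx | hx | hx
        · exact Or.inr ⟨hx, z, hz, hze⟩
        · exact Or.inl ⟨z, hz, hze.trans hx.symm⟩
        · exact key x hx
    · have h' : G.ends z.1 = s(a, b) := by
        have h2 := h
        simp only [splitOff] at h2
        rwa [if_neg hze] at h2
      refine ⟨Walk.cons z.1 h' r, ?_⟩
      intro x hx
      simp only [Walk.edges, List.mem_cons] at hx
      rcases hx with hx | hx
      · exact Or.inl ⟨z, hz, hx.symm⟩
      · exact key x hx

theorem immerses_of_splitOff {H G : Multigraph} {e f : G.E} {c d v : G.V} (hcd : c ≠ d)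
    (he : G.ends e = s(c, v)) (hf : G.ends f = s(d, v))
    (h : Immerses H (G.splitOff e f c d hcd)) : Immerses H G := by
  obtain ⟨I⟩ := h
  have hw : ∀ x : H.E, ∃ r : G.Walk (I.pstart x) (I.pend x), r.IsPath ∧ ∀ z ∈ r.edges,
      (∃ y ∈ (I.walk x).edges, y.1 = z) ∨ (z = f ∧ ∃ y ∈ (I.walk x).edges, y.1 = e) := by
    intro x
    obtain ⟨r, hr⟩ := splitOff_walk hcd he hf (I.walk x)
    obtain ⟨q, h1, h2⟩ := r.exists_path
    exact ⟨q, h1, fun z hz => hr z (h2 z hz)⟩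
  choose W hW1 hW2 using hw
  refine ⟨⟨I.vmap, I.inj, I.pstart, I.pend, W, I.ends_eq, hW1, ?_⟩⟩
  intro x x' hx z hz hz'
  have hd := I.edgeDisj x x' hx
  rcases hW2 x z hz with ⟨y, h1, h2⟩ | ⟨h0, y, h1, h2⟩ <;>
  rcases hW2 x' z hz' with ⟨y', h1', h2'⟩ | ⟨h0', y', h1', h2'⟩
  · have : y = y' := Subtype.ext (h2.trans h2'.symm)
    subst this
    exact hd h1 h1'
  · exact y.2 (h2.trans h0')
  · exact y'.2 (h2'.trans h0)
  · have : y = y' := Subtype.ext (h2.trans h2'.symm)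
    subst this
    exact hd h1 h1'

/-- The image in `G.E` of a cut of the split graph. -/
theorem mem_splitOff_cut {G : Multigraph} {e f : G.E} {c d : G.V} (hcd : c ≠ d)
    (A : Finset G.V) (x : (G.splitOff e f c d hcd).E) :
    x ∈ (G.splitOff e f c d hcd).cut A ↔
      if x.1 = e then ((c ∈ A ∧ d ∉ A) ∨ (d ∈ A ∧ c ∉ A)) else x.1 ∈ G.cut A := by
  by_cases hx : x.1 = e
  · rw [if_pos hx]
    exact mem_cut_iff (G := G.splitOff e f c d hcd) (by simp [splitOff, hx])
  · rw [if_neg hx]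
    obtain ⟨a, b, h⟩ := G.exists_ends x.1
    rw [mem_cut_iff h]
    exact mem_cut_iff (G := G.splitOff e f c d hcd) (by simp [splitOff, hx, h])

theorem splitOff_cut_eq {G : Multigraph} {e f : G.E} {c d v : G.V} (hcd : c ≠ d) (hef : e ≠ f)
    (he : G.ends e = s(c, v)) (hf : G.ends f = s(d, v)) (A : Finset G.V) (hv : v ∉ A)
    (hA : ¬ (c ∈ A ∧ d ∈ A)) :
    ((G.splitOff e f c d hcd).cut A).card = (G.cut A).card := by
  have e1 : e ∈ G.cut A ↔ c ∈ A := by rw [mem_cut_iff he]; tauto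
  have f1 : f ∈ G.cut A ↔ d ∈ A := by rw [mem_cut_iff hf]; tauto
  by_cases hd : d ∈ A
  · have hc : c ∉ A := fun h => hA ⟨h, hd⟩
    refine Finset.card_bij (fun x _ => if x.1 = e then f else x.1) ?_ ?_ ?_
    · intro x hx
      rw [mem_splitOff_cut] at hx
      split_ifs with h
      · exact f1.2 hd
      · simpa [h] using hx
    · intro x hx y hy hxy
      have := x.2
      have := y.2
      apply Subtype.ext
      split_ifs at hxy <;> simp_all
    · intro x hx
      by_cases hxf : x = f
      · exact ⟨⟨e, hef⟩, by rw [mem_splitOff_cut]; simp [hd, hc], by simp [hxf]⟩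
      · have hxe : x ≠ e := fun h => hc (e1.1 (h ▸ hx))
        exact ⟨⟨x, hxf⟩, by rw [mem_splitOff_cut]; simp [hxe, hx], by simp [hxe]⟩
  · refine Finset.card_bij (fun x _ => x.1) ?_ ?_ ?_
    · intro x hx
      rw [mem_splitOff_cut] at hx
      split_ifs at hx with h
      · rw [h]; exact e1.2 (by tauto)
      · exact hx
    · intro x hx y hy hxy
      exact Subtype.ext hxy
    · intro x hx
      have hxf : x ≠ f := fun h => hd (f1.1 (h ▸ hx))
      refine ⟨⟨x, hxf⟩, ?_, rfl⟩
      rw [mem_splitOff_cut]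
      split_ifs with h
      · have h' : x = e := h
        left
        exact ⟨e1.1 (h' ▸ hx), hd⟩
      · exact hx

theorem splitOff_cut_add_two {G : Multigraph} {e f : G.E} {c d v : G.V} (hcd : c ≠ d)
    (A : Finset G.V) (hc : c ∈ A) (hd : d ∈ A) :
    (G.cut A).card ≤ ((G.splitOff e f c d hcd).cut A).card + 2 := by
  have : G.cut A ⊆ (((G.splitOff e f c d hcd).cut A).image fun x => x.1) ∪ {e, f} := by
    intro x hx
    by_cases hxe : x = e
    · simp [hxe]
    by_cases hxf : x = f
    · simp [hxf]
    refine Finset.mem_union_left _ (Finset.mem_image.2 ⟨⟨x, hxf⟩, ?_, rfl⟩)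
    rw [mem_splitOff_cut]
    simp [hxe, hx]
  refine (Finset.card_le_card this).trans ((Finset.card_union_le _ _).trans ?_)
  exact Nat.add_le_add Finset.card_image_le Finset.card_le_two

/-- The setting: `v` separates `C` and `D`. -/
theorem twoConnected_aux (G : Multigraph) (h5 : G.Weakly5EC) (v : G.V) (hv : G.IsCutVertex v) :
    ∃ (e f : G.E) (c d : G.V) (hcd : c ≠ d), G.ends e = s(c, v) ∧ G.ends f = s(d, v) ∧
      (G.splitOff e f c d hcd).Weakly5EC ∧ ¬ (G.splitOff e f c d hcd).IsRegular 3 := by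
  obtain ⟨C, D, hC, hD, hCD, hvC, hvD, hall, hno⟩ := hv
  obtain ⟨⟨h3, h3'⟩, h4⟩ := h5
  have hdis : ∀ x, x ∈ C → x ∈ D → False := fun x h1 h2 => Finset.disjoint_left.1 hCD h1 h2
  -- edges leaving a subset of one side
  have side : ∀ (C D : Finset G.V), (∀ x, x ∈ C → x ∈ D → False) → v ∉ C →
      (∀ x : G.V, x ∈ C ∪ D ∨ x = v) → (∀ e : G.E, ¬ ∃ u ∈ C, ∃ w ∈ D, G.ends e = s(u, w)) →
      ∀ x ∈ G.cut C, ∃ a ∈ C, G.ends x = s(a, v) := by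
    intro C D hdis hvC hall hno x hx
    unfold cut at hx
    simp only [Finset.mem_filter, Finset.mem_univ, true_and, Finset.mem_compl] at hx
    obtain ⟨a, ha, b, hb, he⟩ := hx
    rcases hall b with h | h
    · rcases Finset.mem_union.1 h with h | h
      · exact absurd h hb
      · exact absurd ⟨a, ha, b, h, he⟩ (hno x)
    · exact ⟨a, ha, h ▸ he⟩
  have sC := side C D hdis hvC hall hno
  have sD := side D C (fun x h1 h2 => hdis x h2 h1) hvD
    (fun x => by rw [Finset.union_comm]; exact hall x)
    (fun e ⟨u, hu, w, hw, h⟩ => hno e ⟨w, hw, u, hu, h.trans Sym2.eq_swap⟩)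
  have nuniv : ∀ A : Finset G.V, v ∉ A → A ≠ Finset.univ :=
    fun A h hA => h (hA ▸ Finset.mem_univ v)
  have dC := h3 C hC (nuniv C hvC)
  have dD := h3 D hD (nuniv D hvD)
  obtain ⟨e, heC⟩ := Finset.card_pos.1 (show 0 < (G.cut C).card by omega)
  obtain ⟨f, hfD⟩ := Finset.card_pos.1 (show 0 < (G.cut D).card by omega)
  obtain ⟨c, hc, he⟩ := sC e heC
  obtain ⟨d, hd, hf⟩ := sD f hfD
  have hcd : c ≠ d := fun h => hdis c hc (h ▸ hd)
  have hcutdis : Disjoint (G.cut C) (G.cut D) := by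
    rw [Finset.disjoint_left]
    intro x h1 h2
    obtain ⟨a, ha, h1⟩ := sC x h1
    obtain ⟨b, hb, h2⟩ := sD x h2
    rcases Sym2.eq_iff.1 (h1.symm.trans h2) with ⟨h, -⟩ | ⟨h, -⟩
    · exact hdis a ha (h ▸ hb)
    · exact hvC (h ▸ ha)
  have hef : e ≠ f := fun h => Finset.disjoint_left.1 hcutdis heC (h ▸ hfD)
  refine ⟨e, f, c, d, hcd, he, hf, ?_, ?_⟩
  · -- main connectivity computation
    have main : ∀ A : Finset G.V, v ∉ A → A.Nonempty →
        3 ≤ ((G.splitOff e f c d hcd).cut A).card ∧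
        (((G.splitOff e f c d hcd).cut A).card = 3 → A.card = 1 ∨ Aᶜ.card = 1) ∧
        (((G.splitOff e f c d hcd).cut A).card = 4 → A.card ≤ 2 ∨ Aᶜ.card ≤ 2) := by
      intro A hvA hA
      by_cases hcdA : c ∈ A ∧ d ∈ A
      · obtain ⟨hcA, hdA⟩ := hcdA
        have hle := splitOff_cut_add_two (v := v) (e := e) (f := f) hcd A hcA hdA
        have hsub : G.cut (A ∩ C) ∪ G.cut (A ∩ D) ⊆ G.cut A := by
          intro x hx
          rcases Finset.mem_union.1 hx with hx | hx
          · unfold cut at hx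
            simp only [Finset.mem_filter, Finset.mem_univ, true_and, Finset.mem_compl,
              Finset.mem_inter] at hx
            obtain ⟨a, ⟨haA, haC⟩, b, hb, h⟩ := hx
            refine (mem_cut_iff h).2 (Or.inl ⟨haA, fun hbA => ?_⟩)
            rcases hall b with h' | h'
            · rcases Finset.mem_union.1 h' with h' | h'
              · exact hb ⟨hbA, h'⟩
              · exact hno x ⟨a, haC, b, h', h⟩
            · exact hvA (h' ▸ hbA)
          · unfold cut at hx
            simp only [Finset.mem_filter, Finset.mem_univ, true_and, Finset.mem_compl,
              Finset.mem_inter] at hx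
            obtain ⟨a, ⟨haA, haD⟩, b, hb, h⟩ := hx
            refine (mem_cut_iff h).2 (Or.inl ⟨haA, fun hbA => ?_⟩)
            rcases hall b with h' | h'
            · rcases Finset.mem_union.1 h' with h' | h'
              · exact hno x ⟨b, h', a, haD, h.trans Sym2.eq_swap⟩
              · exact hb ⟨hbA, h'⟩
            · exact hvA (h' ▸ hbA)
        have hdisj : Disjoint (G.cut (A ∩ C)) (G.cut (A ∩ D)) := by
          rw [Finset.disjoint_left]
          intro x h1 h2
          unfold cut at h1
          simp only [Finset.mem_filter, Finset.mem_univ, true_and, Finset.mem_compl,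
            Finset.mem_inter] at h1
          obtain ⟨a, ⟨haA, haC⟩, b, hb, h⟩ := h1
          rcases (mem_cut_iff h).1 h2 with ⟨h2, -⟩ | ⟨h2, -⟩
          · exact hdis a haC (Finset.mem_inter.1 h2).2
          · exact hno x ⟨a, haC, b, (Finset.mem_inter.1 h2).2, h⟩
        have hcard := Finset.card_le_card hsub
        rw [Finset.card_union_of_disjoint hdisj] at hcard
        have nC : (A ∩ C).Nonempty := ⟨c, Finset.mem_inter.2 ⟨hcA, hc⟩⟩
        have nD : (A ∩ D).Nonempty := ⟨d, Finset.mem_inter.2 ⟨hdA, hd⟩⟩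
        have uC := nuniv (A ∩ C) (fun h => hvA (Finset.mem_inter.1 h).1)
        have uD := nuniv (A ∩ D) (fun h => hvA (Finset.mem_inter.1 h).1)
        have kC := h3 _ nC uC
        have kD := h3 _ nD uD
        refine ⟨by omega, by omega, fun h => Or.inl ?_⟩
        have big : ∀ (B : Finset G.V) (y : G.V), v ∉ B → y ∉ B → y ≠ v → Bᶜ.card ≠ 1 := by
          intro B y h1 h2 h3 h4
          obtain ⟨z, hz⟩ := Finset.card_eq_one.1 h4
          have a1 : v ∈ Bᶜ := Finset.mem_compl.2 h1
          have a2 : y ∈ Bᶜ := Finset.mem_compl.2 h2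
          rw [hz, Finset.mem_singleton] at a1 a2
          exact h3 (a2.trans a1.symm)
        have oC : (A ∩ C).card = 1 := (h3' _ nC uC (by omega)).resolve_right
          (big _ d (fun h => hvA (Finset.mem_inter.1 h).1)
            (fun h => hdis d (Finset.mem_inter.1 h).2 hd) (fun h => hvD (h ▸ hd)))
        have oD : (A ∩ D).card = 1 := (h3' _ nD uD (by omega)).resolve_right
          (big _ c (fun h => hvA (Finset.mem_inter.1 h).1)
            (fun h => hdis c hc (Finset.mem_inter.1 h).2) (fun h => hvC (h ▸ hc)))
        have hAsub : A ⊆ (A ∩ C) ∪ (A ∩ D) := by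
          intro x hx
          rcases hall x with h | h
          · rw [← Finset.inter_union_distrib_left]
            exact Finset.mem_inter.2 ⟨hx, h⟩
          · exact absurd (h ▸ hx) hvA
        have := (Finset.card_le_card hAsub).trans (Finset.card_union_le _ _)
        omega
      · rw [splitOff_cut_eq hcd hef he hf A hvA hcdA]
        exact ⟨h3 A hA (nuniv A hvA), h3' A hA (nuniv A hvA), h4 A hA (nuniv A hvA)⟩
    have main' : ∀ A : Finset G.V, A.Nonempty → A ≠ Finset.univ →
        3 ≤ ((G.splitOff e f c d hcd).cut A).card ∧
        (((G.splitOff e f c d hcd).cut A).card = 3 → A.card = 1 ∨ Aᶜ.card = 1) ∧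
        (((G.splitOff e f c d hcd).cut A).card = 4 → A.card ≤ 2 ∨ Aᶜ.card ≤ 2) := by
      intro A hA hA'
      by_cases hvA : v ∈ A
      · have hne : Aᶜ.Nonempty := by
          rw [Finset.nonempty_iff_ne_empty]
          intro h
          exact hA' ((Finset.compl_eq_empty_iff A).1 h)
        obtain ⟨h1, h2, h3⟩ := main Aᶜ (by simpa using hvA) hne
        have hcc : (G.splitOff e f c d hcd).cut Aᶜ = (G.splitOff e f c d hcd).cut A :=
          cut_compl (G := G.splitOff e f c d hcd) A
        rw [hcc] at h1 h2 h3
        rw [compl_compl] at h2 h3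
        exact ⟨h1, fun h => (h2 h).symm, fun h => (h3 h).symm⟩
      · exact main A hvA hA
    exact ⟨⟨fun A h1 h2 => (main' A h1 h2).1, fun A h1 h2 => (main' A h1 h2).2.1⟩,
      fun A h1 h2 => (main' A h1 h2).2.2⟩
  · intro hreg
    have hr : (G.splitOff e f c d hcd).deg v = 3 := hreg v
    unfold deg at hr
    have hsub : (G.cut C).erase e ∪ (G.cut D).erase f ⊆
        (Finset.univ.filter fun x : (G.splitOff e f c d hcd).E =>
          (show (G.splitOff e f c d hcd).V from v) ∈ (G.splitOff e f c d hcd).ends x).image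
          (fun x => x.1) := by
      intro x hx
      have hxe : x ≠ e := by
        rintro rfl
        rcases Finset.mem_union.1 hx with h | h
        · exact (Finset.mem_erase.1 h).1 rfl
        · exact Finset.disjoint_left.1 hcutdis heC (Finset.mem_erase.1 h).2
      have hxf : x ≠ f := by
        rintro rfl
        rcases Finset.mem_union.1 hx with h | h
        · exact Finset.disjoint_left.1 hcutdis (Finset.mem_erase.1 h).2 hfD
        · exact (Finset.mem_erase.1 h).1 rfl
      have hvx : v ∈ G.ends x := by
        rcases Finset.mem_union.1 hx with h | h
        · obtain ⟨a, -, h⟩ := sC x (Finset.mem_erase.1 h).2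
          rw [h]; simp
        · obtain ⟨a, -, h⟩ := sD x (Finset.mem_erase.1 h).2
          rw [h]; simp
      refine Finset.mem_image.2 ⟨⟨x, hxf⟩, ?_, rfl⟩
      refine Finset.mem_filter.2 ⟨Finset.mem_univ _, ?_⟩
      simp only [splitOff]
      rw [if_neg hxe]
      exact hvx
    have hle := (Finset.card_le_card hsub).trans Finset.card_image_le
    have hd2 : Disjoint ((G.cut C).erase e) ((G.cut D).erase f) :=
      Finset.disjoint_of_subset_left (Finset.erase_subset _ _)
        (Finset.disjoint_of_subset_right (Finset.erase_subset _ _) hcutdis)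
    rw [Finset.card_union_of_disjoint hd2, Finset.card_erase_of_mem heC,
      Finset.card_erase_of_mem hfD] at hle
    have hle2 := hle.trans (le_of_eq hr)
    omega

end Multigraph

open Multigraph in
/-- Every weakly 5-edge-connected `K_{3,3}`-immersion-free graph `G` with at
least 6 vertices that is not 3-regular planar and has the fewest edges among
all weakly 5-edge-connected non-3-regular-planar `K_{3,3}`-immersion-free
graphs on `|V(G)|` vertices is 2-connected. -/
theorem minimal_C5_twoConnected (G : Multigraph)
    (h5 : G.Weakly5EC) (hno : ¬ Immerses K33 G)
    (hnrp : ¬ (G.IsRegular 3 ∧ G.Planar))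
    (hmin : ∀ G' : Multigraph, Fintype.card G'.V = Fintype.card G.V →
      G'.Weakly5EC → ¬ Immerses K33 G' → ¬ (G'.IsRegular 3 ∧ G'.Planar) →
      Fintype.card G.E ≤ Fintype.card G'.E)
    (hn : 6 ≤ Fintype.card G.V) :
    G.TwoConnected := by
  refine ⟨connected_of_edgeConn h5.1.1, by omega, ?_⟩
  intro v hv
  obtain ⟨e, f, c, d, hcd, he, hf, hw, hr⟩ := twoConnected_aux G h5 v hv
  have hle := hmin (G.splitOff e f c d hcd) rfl hw
    (fun h => hno (immerses_of_splitOff hcd he hf h)) (fun h => hr h.1)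
  have hlt : Fintype.card (G.splitOff e f c d hcd).E < Fintype.card G.E :=
    Fintype.card_lt_of_injective_of_notMem (fun x : {x : G.E // x ≠ f} => x.1)
      Subtype.val_injective (b := f) (by rintro ⟨x, hx⟩; exact x.2 hx)
  omega
end
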